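/- Let n be an odd positive integer and θ ∈ (0,π/4]. Let t_{n−1,1} be the smallest zero of H_{n−1}, and let t^θ_{n−1,n} be the unique point in (t_{n,n}, ∞) such that tan θ · H_n(t^θ_{n−1,n}) = H_n(t_{n−1,1}). Then: (1) for every t ≥ t_{n,n}, the function x ↦ Φ^θ_n(x,t) has exactly one zero in the interval (−∞, t_{n,1}]; (2) for every t > t^θ_{n−1,n}, the function x ↦ Φ^θ_n(x,t) has exactly one zero in ℝ. -/

import Mathlib

/-- The physicist's Hermite polynomials: `H 0 = 1`, `H 1 = 2X`,
`H (n+2) = 2X · H (n+1) - 2(n+1) · H n`. -/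
noncomputable def H : ℕ → Polynomial ℝ
  | 0 => 1
  | 1 => Polynomial.C 2 * Polynomial.X
  | n + 2 => Polynomial.C 2 * Polynomial.X * H (n + 1) - Polynomial.C (2 * (n + 1) : ℝ) * H n

/-- The eigenfunction `Φ^θ_n(x,y) = (cos θ · H_n(x) + sin θ · H_n(y)) e^{-(x²+y²)/2}`. -/
noncomputable def Phi (n : ℕ) (θ : ℝ) : ℝ × ℝ → ℝ := fun p =>
  (Real.cos θ * (H n).eval p.1 + Real.sin θ * (H n).eval p.2) *
    Real.exp (-(p.1 ^ 2 + p.2 ^ 2) / 2)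

/-- The nodal set of `Φ^θ_n`. -/
noncomputable def nodalSet (n : ℕ) (θ : ℝ) : Set (ℝ × ℝ) := {p | Phi n θ p = 0}

/-- The number of nodal domains: the number of connected components of the
complement of the nodal set. -/
noncomputable def numNodalDomains (n : ℕ) (θ : ℝ) : ℕ :=
  {C : Set (ℝ × ℝ) | ∃ p, Phi n θ p ≠ 0 ∧
    C = connectedComponentIn {q : ℝ × ℝ | Phi n θ q ≠ 0} p}.ncard

/-!
By oddness of `H_n`, a zero `x` of `Φ^θ_n(·, s)` corresponds to a solution `-x` of
`H_n = tan θ · H_n(s)`. To the right of the largest zero `d = -t_{n-1,1}` of `H_{n-1}` the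
polynomial `H_n` increases strictly to `+∞`, which gives (1). For (2) the level `tan θ · H_n(s)`
exceeds `tan θ · H_n(T) = -H_n(d) = |H_n(d)|`. By Sonin's theorem the moduli of the critical values
of `H_n` grow with the distance from the origin, so `H_n` stays below this level to the left of `d`.
-/

section Hermite

open Polynomial Set Filter

variable {n : ℕ} {a c v x : ℝ}

theorem H_add_two (n : ℕ) : H (n + 2) = C 2 * X * H (n + 1) - C (2 * (n + 1) : ℝ) * H n := by
  simp only [H]

theorem derivative_H_succ (n : ℕ) : derivative (H (n + 1)) = C (2 * (n + 1) : ℝ) * H n := by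
  induction n using Nat.twoStepInduction with
  | zero => simp [H]
  | one => simp [H]; ring
  | more n ih₀ ih₁ =>
    rw [H_add_two, derivative_sub, derivative_mul, derivative_C_mul, derivative_C_mul, ih₀, ih₁,
      H_add_two, derivative_X]
    push_cast
    simp only [map_mul, map_add, map_one, map_ofNat]
    ring

theorem derivative_H (n : ℕ) : derivative (H n) = C 2 * X * H n - H (n + 1) := by
  cases n with
  | zero => simp [H]
  | succ n => rw [derivative_H_succ, H_add_two]; ring

theorem hasDerivAt_eval_H_succ (n : ℕ) (x : ℝ) :
    HasDerivAt (fun y ↦ (H (n + 1)).eval y) (2 * (n + 1) * (H n).eval x) x := by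
  simpa [derivative_H_succ] using (H (n + 1)).hasDerivAt x

theorem hasDerivAt_eval_H (n : ℕ) (x : ℝ) :
    HasDerivAt (fun y ↦ (H n).eval y) (2 * x * (H n).eval x - (H (n + 1)).eval x) x := by
  simpa [derivative_H] using (H n).hasDerivAt x

theorem eval_neg_H (n : ℕ) (x : ℝ) : (H n).eval (-x) = (-1) ^ n * (H n).eval x := by
  induction n using Nat.twoStepInduction with
  | zero => simp [H]
  | one => simp [H]
  | more n ih₀ ih₁ =>
    simp only [H_add_two, eval_sub, eval_mul, eval_C, eval_X, ih₀, ih₁]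
    ring

theorem eval_neg_H_of_odd (hn : Odd n) (x : ℝ) : (H n).eval (-x) = -(H n).eval x := by
  rw [eval_neg_H, hn.neg_one_pow, neg_one_mul]

theorem isRoot_H_neg_iff : (H n).IsRoot (-x) ↔ (H n).IsRoot x := by
  simp [IsRoot, eval_neg_H]

theorem isGreatest_neg_of_isLeast_roots_H (ha : IsLeast {x | (H n).IsRoot x} a) :
    IsGreatest {x | (H n).IsRoot x} (-a) :=
  ⟨isRoot_H_neg_iff.2 ha.1, fun _ hx ↦ le_neg.2 (ha.2 (isRoot_H_neg_iff.2 hx))⟩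

theorem degree_C_mul_lt_degree_C_mul_X_mul {p q : ℝ[X]} {r : ℝ} (s : ℝ) (hr : r ≠ 0)
    (hqp : q.degree < p.degree) : (C s * q).degree < (C r * X * p).degree := by
  rw [← smul_eq_C_mul, degree_mul, degree_C_mul_X hr]
  exact (degree_smul_le s q).trans_lt (hqp.trans_le (le_add_of_nonneg_left zero_le_one))

theorem degree_H (n : ℕ) : (H n).degree = n := by
  induction n using Nat.twoStepInduction with
  | zero => simp [H]
  | one => simp [H]
  | more n ih₀ ih₁ =>
    have hlt : (H n).degree < (H (n + 1)).degree := by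
      rw [ih₀, ih₁]; exact_mod_cast n.lt_succ_self
    rw [H_add_two, degree_sub_eq_left_of_degree_lt
      (degree_C_mul_lt_degree_C_mul_X_mul _ two_ne_zero hlt), degree_mul,
      degree_C_mul_X two_ne_zero, ih₁]
    norm_cast
    omega

theorem leadingCoeff_H (n : ℕ) : (H n).leadingCoeff = 2 ^ n := by
  induction n using Nat.twoStepInduction with
  | zero => simp [H]
  | one => simp [H]
  | more n _ ih =>
    have hlt : (H n).degree < (H (n + 1)).degree := by
      rw [degree_H, degree_H]; exact_mod_cast n.lt_succ_self
    rw [H_add_two, leadingCoeff_sub_of_degree_lt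
      (degree_C_mul_lt_degree_C_mul_X_mul _ two_ne_zero hlt), leadingCoeff_mul,
      leadingCoeff_C_mul_X, ih, ← pow_succ']

theorem tendsto_eval_H_succ_atTop (n : ℕ) :
    Tendsto (fun x ↦ (H (n + 1)).eval x) atTop atTop := by
  refine tendsto_atTop_of_leadingCoeff_nonneg _ ?_ ?_
  · rw [degree_H]; exact_mod_cast n.succ_pos
  · rw [leadingCoeff_H]; positivity

theorem eval_H_pos_of_gt (hc : c ∈ upperBounds {x | (H n).IsRoot x}) (hx : c < x) :
    0 < (H n).eval x :=
  zero_lt_eval_of_roots_lt_of_leadingCoeff_nonneg (fun _ hy ↦ (hc hy).trans_lt hx)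
    (by rw [leadingCoeff_H]; positivity)

theorem eval_H_nonneg_of_ge (hc : c ∈ upperBounds {x | (H n).IsRoot x}) (hx : c ≤ x) :
    0 ≤ (H n).eval x :=
  zero_le_eval_of_roots_le_of_leadingCoeff_nonneg (fun _ hy ↦ (hc hy).trans hx)
    (by rw [leadingCoeff_H]; positivity)

theorem strictMonoOn_eval_H_succ (hc : c ∈ upperBounds {x | (H n).IsRoot x}) :
    StrictMonoOn (fun x ↦ (H (n + 1)).eval x) (Ici c) := by
  refine strictMonoOn_of_hasDerivWithinAt_pos (convex_Ici c) (H (n + 1)).continuousOn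
    (fun x _ ↦ (hasDerivAt_eval_H_succ n x).hasDerivWithinAt) fun x hx ↦ ?_
  rw [interior_Ici] at hx
  have := eval_H_pos_of_gt hc hx
  positivity

theorem existsUnique_ge_eval_H_succ_eq (hc : c ∈ upperBounds {x | (H n).IsRoot x})
    (hv : (H (n + 1)).eval c ≤ v) : ∃! x, c ≤ x ∧ (H (n + 1)).eval x = v := by
  obtain ⟨x, hx, hxv⟩ := intermediate_value_Ici (H (n + 1)).continuousOn
    (tendsto_eval_H_succ_atTop n) hv
  exact ⟨x, ⟨hx, hxv⟩, fun y ⟨hy, hyv⟩ ↦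
    (strictMonoOn_eval_H_succ hc).injOn hy hx (hyv.trans hxv.symm)⟩

theorem hasDerivAt_exp_neg_sq_mul_eval_H (n : ℕ) (x : ℝ) :
    HasDerivAt (fun y ↦ Real.exp (-y ^ 2) * (H n).eval y)
      (-(Real.exp (-x ^ 2) * (H (n + 1)).eval x)) x := by
  refine ((hasDerivAt_pow 2 x).fun_neg.exp.mul (hasDerivAt_eval_H n x)).congr_deriv ?_
  push_cast
  ring

theorem eval_H_succ_neg_of_isGreatest (hc : IsGreatest {x | (H n).IsRoot x} c) :
    (H (n + 1)).eval c < 0 := by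
  by_contra! hcnn
  have hpos (x : ℝ) (hx : c < x) : 0 < (H (n + 1)).eval x :=
    hcnn.trans_lt (strictMonoOn_eval_H_succ hc.2 self_mem_Ici hx.le hx)
  have hanti : StrictAntiOn (fun x ↦ Real.exp (-x ^ 2) * (H n).eval x) (Ici c) := by
    refine strictAntiOn_of_hasDerivWithinAt_neg (convex_Ici c) (by fun_prop)
      (fun x _ ↦ (hasDerivAt_exp_neg_sq_mul_eval_H n x).hasDerivWithinAt) fun x hx ↦ ?_
    rw [interior_Ici] at hx
    exact neg_neg_of_pos (mul_pos (Real.exp_pos _) (hpos x hx))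
  have hlt : c < c + 1 := lt_add_one c
  have hneg : Real.exp (-(c + 1) ^ 2) * (H n).eval (c + 1) < Real.exp (-c ^ 2) * (H n).eval c :=
    hanti self_mem_Ici hlt.le hlt
  rw [hc.1.eq_zero, mul_zero] at hneg
  exact hneg.not_gt (mul_pos (Real.exp_pos _) (eval_H_pos_of_gt hc.2 hlt))

/-- Sonin's function of `H (n + 1)`, used to compare the critical values of `H (n + 1)`: the second
term is a multiple of the squared derivative, so it vanishes at the critical points. -/
noncomputable def soninH (n : ℕ) (x : ℝ) : ℝ :=
  (H (n + 1)).eval x ^ 2 + 2 * (n + 1) * (H n).eval x ^ 2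

theorem soninH_abs (n : ℕ) (x : ℝ) : soninH n |x| = soninH n x := by
  rcases abs_choice x with h | h <;> simp [h, soninH, eval_neg_H, mul_pow, ← pow_mul]

theorem soninH_of_isRoot (hx : (H n).IsRoot x) : soninH n x = (H (n + 1)).eval x ^ 2 := by
  simp [soninH, hx.eq_zero]

theorem sq_eval_H_succ_le_soninH (n : ℕ) (x : ℝ) : (H (n + 1)).eval x ^ 2 ≤ soninH n x :=
  le_add_of_nonneg_right (by positivity)

theorem hasDerivAt_soninH (n : ℕ) (x : ℝ) :
    HasDerivAt (soninH n) (8 * (n + 1) * x * (H n).eval x ^ 2) x := by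
  refine (((hasDerivAt_eval_H_succ n x).pow 2).add
    (((hasDerivAt_eval_H n x).pow 2).const_mul (2 * (n + 1 : ℝ)))).congr_deriv ?_
  push_cast
  ring

theorem monotoneOn_soninH (n : ℕ) : MonotoneOn (soninH n) (Ici 0) := by
  refine monotoneOn_of_hasDerivWithinAt_nonneg (convex_Ici 0)
    (HasDerivAt.continuousOn fun x _ ↦ hasDerivAt_soninH n x)
    (fun x _ ↦ (hasDerivAt_soninH n x).hasDerivWithinAt) fun x hx ↦ ?_
  have : 0 ≤ x := interior_subset hx
  positivity

theorem abs_eval_H_succ_le_of_isRoot (hc : (H n).IsRoot c) (hx : |x| ≤ |c|) :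
    |(H (n + 1)).eval x| ≤ |(H (n + 1)).eval c| := by
  refine sq_le_sq.1 ?_
  calc (H (n + 1)).eval x ^ 2 ≤ soninH n x := sq_eval_H_succ_le_soninH n x
    _ = soninH n |x| := (soninH_abs n x).symm
    _ ≤ soninH n |c| := monotoneOn_soninH n (abs_nonneg x) (abs_nonneg c) hx
    _ = (H (n + 1)).eval c ^ 2 := by rw [soninH_abs, soninH_of_isRoot hc]

theorem eval_H_succ_le_of_le_isGreatest (hn : Even n) (hc : IsGreatest {x | (H n).IsRoot x} c)
    (hx : x ≤ c) : (H (n + 1)).eval x ≤ -(H (n + 1)).eval c := by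
  rcases le_or_gt (-c) x with hcx | hxc
  · calc (H (n + 1)).eval x ≤ |(H (n + 1)).eval x| := le_abs_self _
      _ ≤ |(H (n + 1)).eval c| :=
        abs_eval_H_succ_le_of_isRoot hc.1 ((abs_le.2 ⟨hcx, hx⟩).trans (le_abs_self c))
      _ = -(H (n + 1)).eval c := abs_of_neg (eval_H_succ_neg_of_isGreatest hc)
  · have hlt : (H (n + 1)).eval c < (H (n + 1)).eval (-x) :=
      strictMonoOn_eval_H_succ hc.2 self_mem_Ici (lt_neg.2 hxc).le (lt_neg.2 hxc)
    rw [eval_neg_H_of_odd hn.add_one] at hlt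
    exact (lt_neg.2 hlt).le

theorem existsUnique_eval_H_succ_eq (hn : Even n) (hc : IsGreatest {x | (H n).IsRoot x} c)
    (hv : -(H (n + 1)).eval c < v) : ∃! x, (H (n + 1)).eval x = v := by
  have hcneg := eval_H_succ_neg_of_isGreatest hc
  obtain ⟨x, ⟨-, hxv⟩, hxuniq⟩ := existsUnique_ge_eval_H_succ_eq (v := v) hc.2 (by linarith)
  refine ⟨x, hxv, fun y hyv ↦ hxuniq y ⟨?_, hyv⟩⟩
  by_contra! hyc
  exact (hv.trans_eq hyv.symm).not_ge (eval_H_succ_le_of_le_isGreatest hn hc hyc.le)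

theorem le_of_mem_upperBounds_roots_H_succ {d : ℝ} (hd : IsGreatest {x | (H n).IsRoot x} d)
    (hc : c ∈ upperBounds {x | (H (n + 1)).IsRoot x}) : d ≤ c := by
  obtain ⟨x, ⟨hdx, hx⟩, -⟩ :=
    existsUnique_ge_eval_H_succ_eq hd.2 (eval_H_succ_neg_of_isGreatest hd).le
  exact hdx.trans (hc hx)

theorem Phi_eq_zero_iff_of_odd {θ y : ℝ} (hn : Odd n) (hθ : Real.cos θ ≠ 0) :
    Phi n θ (x, y) = 0 ↔ (H n).eval (-x) = Real.tan θ * (H n).eval y := by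
  have hfactor : Real.cos θ * (H n).eval x + Real.sin θ * (H n).eval y =
      Real.cos θ * ((H n).eval x + Real.tan θ * (H n).eval y) := by
    rw [← Real.tan_mul_cos hθ]
    ring
  simp only [Phi, hfactor, mul_eq_zero, hθ, Real.exp_ne_zero, false_or, or_false]
  rw [eval_neg_H_of_odd hn, neg_eq_iff_add_eq_zero]

end Hermite

section Enumeration

variable {α : Type*} [Preorder α] {n : ℕ} {t : Fin n → α}

theorem isLeast_range_fin (ht : Monotone t) (hn : 0 < n) :
    IsLeast (Set.range t) (t ⟨0, hn⟩) :=
  ⟨Set.mem_range_self _, Set.forall_mem_range.2 fun _ ↦ ht (Nat.zero_le _)⟩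

theorem isGreatest_range_fin (ht : Monotone t) (hn : n - 1 < n) :
    IsGreatest (Set.range t) (t ⟨n - 1, hn⟩) :=
  ⟨Set.mem_range_self _, Set.forall_mem_range.2 fun i ↦ ht (Nat.le_sub_one_of_lt i.isLt)⟩

end Enumeration

theorem barrier_horizontal_exactly_one_zero_general {n : ℕ} (hn : Even n) {a b c θ T : ℝ}
    (ha : IsLeast {x | (H n).IsRoot x} a) (hb : IsLeast {x | (H (n + 1)).IsRoot x} b)
    (hc : IsGreatest {x | (H (n + 1)).IsRoot x} c) (hθ : Real.cos θ ≠ 0) (hT : c < T)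
    (hTeq : Real.tan θ * (H (n + 1)).eval T = (H (n + 1)).eval a) :
    (∀ s : ℝ, c ≤ s → ∃! x : ℝ, x ∈ Set.Iic b ∧ Phi (n + 1) θ (x, s) = 0) ∧
    (∀ s : ℝ, T < s → ∃! x : ℝ, Phi (n + 1) θ (x, s) = 0) := by
  have hd := isGreatest_neg_of_isLeast_roots_H ha
  obtain rfl : c = -b := hc.unique (isGreatest_neg_of_isLeast_roots_H hb)
  have hdc : -a ≤ -b := le_of_mem_upperBounds_roots_H_succ hd hc.2
  have hlevel : Real.tan θ * (H (n + 1)).eval T = -(H (n + 1)).eval (-a) := by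
    rw [hTeq, eval_neg_H_of_odd hn.add_one, neg_neg]
  have htan : 0 < Real.tan θ := by
    refine pos_of_mul_pos_left ?_ (eval_H_pos_of_gt hc.2 hT).le
    rw [hlevel]
    exact neg_pos.2 (eval_H_succ_neg_of_isGreatest hd)
  have hPhi (x s : ℝ) : Phi (n + 1) θ (x, s) = 0 ↔
      (H (n + 1)).eval (-x) = Real.tan θ * (H (n + 1)).eval s :=
    Phi_eq_zero_iff_of_odd hn.add_one hθ
  refine ⟨fun s hs ↦ ?_, fun s hs ↦ ?_⟩
  · have hv : (H (n + 1)).eval (-b) ≤ Real.tan θ * (H (n + 1)).eval s := by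
      rw [hc.1.eq_zero]
      exact mul_nonneg htan.le (eval_H_nonneg_of_ge hc.2 hs)
    exact ((Equiv.neg ℝ).existsUnique_congr fun x ↦
      and_congr (Set.mem_Iic.trans neg_le_neg_iff.symm) (hPhi x s)).2
      (existsUnique_ge_eval_H_succ_eq (upperBounds_mono_mem hdc hd.2) hv)
  · have hdT : -a ≤ T := hdc.trans hT.le
    have hv : -(H (n + 1)).eval (-a) < Real.tan θ * (H (n + 1)).eval s := by
      rw [← hlevel]
      exact mul_lt_mul_of_pos_left (strictMonoOn_eval_H_succ hd.2 hdT (hdT.trans hs.le) hs) htan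
    exact ((Equiv.neg ℝ).existsUnique_congr fun x ↦ hPhi x s).2
      (existsUnique_eval_H_succ_eq hn hd hv)

open Real Set in
/-- **Lemma 3.3 (1)(2).** Let `n` be odd, `θ ∈ (0,π/4]`, let `t 0 < ⋯ < t (n-1)`
enumerate the zeros of `H_n`, `t' 0 < ⋯ < t' (n-2)` those of `H_{n-1}`, and let `T`
be the unique point in `(t_{n,n}, ∞)` with `tan θ · H_n(T) = H_n(t_{n-1,1})`. Then
(1) for every `s ≥ t_{n,n}`, the function `x ↦ Φ^θ_n(x,s)` has exactly one zero in
`(-∞, t_{n,1}]`; and (2) for every `s > T`, it has exactly one zero in `ℝ`. -/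
theorem barrier_horizontal_exactly_one_zero (n : ℕ) (hodd : Odd n) (hpos : 0 < n)
    (θ : ℝ) (hθ : θ ∈ Set.Ioc 0 (π / 4))
    (t : Fin n → ℝ) (htmono : StrictMono t)
    (htzero : ∀ x : ℝ, (H n).eval x = 0 ↔ ∃ i, x = t i)
    (t' : Fin (n - 1) → ℝ) (ht'mono : StrictMono t')
    (ht'zero : ∀ x : ℝ, (H (n - 1)).eval x = 0 ↔ ∃ i, x = t' i)
    (hn1 : 0 < n - 1)
    (T : ℝ) (hTgt : t ⟨n - 1, by omega⟩ < T)
    (hTeq : Real.tan θ * (H n).eval T = (H n).eval (t' ⟨0, hn1⟩)) :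
    (∀ s : ℝ, t ⟨n - 1, by omega⟩ ≤ s →
      ∃! x : ℝ, x ∈ Set.Iic (t ⟨0, hpos⟩) ∧ Phi n θ (x, s) = 0) ∧
    (∀ s : ℝ, T < s → ∃! x : ℝ, Phi n θ (x, s) = 0) := by
  have hroots : {x | (H n).IsRoot x} = range t := by
    ext x; simpa [eq_comm] using htzero x
  have hroots' : {x | (H (n - 1)).IsRoot x} = range t' := by
    ext x; simpa [eq_comm] using ht'zero x
  have hcos : cos θ ≠ 0 :=
    (cos_pos_of_mem_Ioo ⟨by linarith [pi_pos, hθ.1], by linarith [pi_pos, hθ.2]⟩).ne'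
  obtain ⟨m, rfl⟩ : ∃ m, n = m + 1 := ⟨n - 1, by omega⟩
  exact barrier_horizontal_exactly_one_zero_general (by grind)
    (hroots' ▸ isLeast_range_fin ht'mono.monotone hn1)
    (hroots ▸ isLeast_range_fin htmono.monotone hpos)
    (hroots ▸ isGreatest_range_fin htmono.monotone (by omega)) hcos hTgt hTeq
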